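/- Let (W^-, W^+, ζ) be a random vector with W^-, W^+ ≥ 0, |ζ| ≤ 1 almost surely, 0 < E[W^-] < ∞, 0 < E[W^+] < ∞, and set θ := E[W^- + W^+]. Let Z^- and Z^+ be ℕ-valued random variables that are conditionally independent given (W^-, W^+, ζ), with conditional distributions Poisson with means E[W^+]·W^- /θ and E[W^-]·W^+/θ, respectively. Suppose P(W^- > x) ∈ RV(−α) for some α > 1, and P(W^- /(W^+ ∨ 1) > x) = o(P(W^- > x)) as x → ∞. Then E[1(ζ·Z^- /(Z^+ + 1) > x)·W^+] = o(E[W^+]·P(Z^- > x)) as x → ∞; that is, for the size-biased vector (𝒩, 𝒞) arising from the inhomogeneous random digraph, P(𝒞·𝒩 > x) = o(P(𝒩₀ > x)) where 𝒩₀ has the distribution of Z^-. -/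

import Mathlib

open MeasureTheory ProbabilityTheory Filter Asymptotics Set

/-- The (real-valued) tail probability `P(X > x)`. -/
noncomputable def tailP {Ω : Type*} [MeasurableSpace Ω] (μ : Measure Ω) (X : Ω → ℝ) (x : ℝ) : ℝ :=
  (μ {ω | X ω > x}).toReal

/-- `f` is a regularly varying tail with index `-α`. -/
def RVtail (f : ℝ → ℝ) (α : ℝ) : Prop :=
  ∀ lam : ℝ, 0 < lam →
    Tendsto (fun x => f (lam * x) / f x) atTop (nhds (lam ^ (-α)))

/-- Poisson probability mass function with (real) mean `lam`. -/
noncomputable def poissonPdf (lam : ℝ) (n : ℕ) : ℝ :=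
  Real.exp (-lam) * lam ^ n / (n.factorial : ℝ)

/-!
By Chernoff's bound for `Z⁻ - x Z⁺`, the conditional probability of `Z⁻ > x (Z⁺ + 1)` given the
weights is at most `exp (-x / 2)` when `W⁻ ≤ δ x`, and at most `exp (-c W⁺)` when `W⁻ ≤ c' x W⁺`.
If `W⁻ > δ x` and `W⁻ / (W⁺ ∨ 1) ≤ lam x` with `lam` small, then `W⁺` is so large that
`W⁺ exp (-c W⁺) ≤ η`, which contributes `η P(W⁻ > δ x)`. On `W⁻ / (W⁺ ∨ 1) > lam x` the
probability is bounded by `1`: where `W⁺ ≤ A` the contribution is `o(P(W⁻ > x))` by assumption,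
and where `W⁺ > A` it is at most `E[W⁻; W⁻ > A lam x] / (lam x)`, which Karamata's bound makes
small because `A ^ (1 - α) → 0`. Finally `P(W⁻ > x) = O(P(Z⁻ > x))`, since a Poisson variable with
mean at least `4 x` exceeds `x ≥ 1` with probability at least `1 / 2`.
-/

namespace RVtail

variable {F : ℝ → ℝ} {α c lam : ℝ}

lemma eventually_ne_zero (hF : RVtail F α) : ∀ᶠ x in atTop, F x ≠ 0 := by
  filter_upwards [(hF 1 one_pos).eventually_ne (Real.rpow_pos_of_pos one_pos _).ne'] with x hx h
  simp [h] at hx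

lemma isBigO_comp_mul (hF : RVtail F α) (hlam : 0 < lam) :
    (fun x => F (lam * x)) =O[atTop] F :=
  isBigO_of_div_tendsto_nhds (hF.eventually_ne_zero.mono fun _ hx h => absurd h hx) _ (hF lam hlam)

lemma isBigO_self_comp_mul (hF : RVtail F α) (hlam : 0 < lam) :
    F =O[atTop] fun x => F (lam * x) := by
  simpa only [Function.comp_def, id, inv_mul_cancel_left₀ hlam.ne'] using
    (hF.isBigO_comp_mul (inv_pos.2 hlam)).comp_tendsto (tendsto_id.const_mul_atTop hlam)

lemma eventually_le_mul (hF : RVtail F α) (h0 : ∀ x, 0 ≤ F x) (hlam : 0 < lam)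
    (hc : lam ^ (-α) < c) : ∀ᶠ x in atTop, F (lam * x) ≤ c * F x := by
  filter_upwards [hF.eventually_ne_zero, (hF lam hlam).eventually_le_const hc] with x hx h
  exact (div_le_iff₀ ((h0 x).lt_of_ne' hx)).1 h

lemma eventually_mul_le (hF : RVtail F α) (h0 : ∀ x, 0 ≤ F x) (hlam : 0 < lam)
    (hc : c < lam ^ (-α)) : ∀ᶠ x in atTop, c * F x ≤ F (lam * x) := by
  filter_upwards [hF.eventually_ne_zero, (hF lam hlam).eventually_const_le hc] with x hx h
  exact (le_div_iff₀ ((h0 x).lt_of_ne' hx)).1 h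

lemma eventually_forall_le_pow_mul (hF : RVtail F α) (h0 : ∀ x, 0 ≤ F x) (hlam : 1 ≤ lam)
    (hc : lam ^ (-α) < c) : ∀ᶠ x in atTop, ∀ j : ℕ, F (lam ^ j * x) ≤ c ^ j * F x := by
  have hlam0 : 0 < lam := one_pos.trans_le hlam
  have hc0 : 0 ≤ c := (Real.rpow_nonneg hlam0.le _).trans hc.le
  obtain ⟨x₀, hx₀⟩ := eventually_atTop.1 (hF.eventually_le_mul h0 hlam0 hc)
  filter_upwards [eventually_ge_atTop x₀, eventually_ge_atTop 0] with x hx hx' j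
  have hstep : ∀ k < j, F (lam ^ (k + 1) * x) ≤ c * F (lam ^ k * x) := fun k _ => by
    rw [pow_succ', mul_assoc]
    exact hx₀ _ (hx.trans (le_mul_of_one_le_left hx' (one_le_pow₀ hlam)))
  simpa only [pow_zero, one_mul] using le_geom (u := fun k => F (lam ^ k * x)) hc0 j hstep

lemma eventually_forall_pow_mul_le (hF : RVtail F α) (h0 : ∀ x, 0 ≤ F x) (hlam : 1 ≤ lam)
    (hc0 : 0 ≤ c) (hc : c < lam ^ (-α)) :
    ∀ᶠ x in atTop, ∀ j : ℕ, c ^ j * F x ≤ F (lam ^ j * x) := by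
  obtain ⟨x₀, hx₀⟩ := eventually_atTop.1 (hF.eventually_mul_le h0 (one_pos.trans_le hlam) hc)
  filter_upwards [eventually_ge_atTop x₀, eventually_ge_atTop 0] with x hx hx' j
  have hstep : ∀ k < j, c * F (lam ^ k * x) ≤ F (lam ^ (k + 1) * x) := fun k _ => by
    rw [pow_succ', mul_assoc]
    exact hx₀ _ (hx.trans (le_mul_of_one_le_left hx' (one_le_pow₀ hlam)))
  simpa only [pow_zero, one_mul] using geom_le (u := fun k => F (lam ^ k * x)) hc0 j hstep

lemma rpow_neg_isBigO {p : ℝ} (hF : RVtail F α) (h0 : ∀ x, 0 ≤ F x) (hanti : Antitone F)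
    (hp0 : 0 ≤ p) (hp : α < p) : (fun x => x ^ (-p)) =O[atTop] F := by
  have h2 : (2 : ℝ) ^ (-p) < 2 ^ (-α) :=
    Real.rpow_lt_rpow_of_exponent_lt one_lt_two (neg_lt_neg hp)
  obtain ⟨x₀, hpow, hne, hx₀⟩ :=
    ((hF.eventually_forall_pow_mul_le h0 one_le_two (by positivity) h2).and
      (hF.eventually_ne_zero.and (eventually_gt_atTop 0))).exists
  have hFx₀ : 0 < F x₀ := (h0 x₀).lt_of_ne' hne
  refine .of_bound ((2 / x₀) ^ p / F x₀) ?_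
  filter_upwards [eventually_ge_atTop x₀] with x hx
  have hx0 : 0 < x := hx₀.trans_le hx
  obtain ⟨n, hn, hn'⟩ := exists_nat_pow_near ((one_le_div hx₀).2 hx) one_lt_two
  have hlower : (2 / x₀ * x) ^ (-p) * F x₀ ≤ F x :=
    calc (2 / x₀ * x) ^ (-p) * F x₀ ≤ (2 ^ (n + 1)) ^ (-p) * F x₀ := by
          gcongr ?_ * _
          refine Real.rpow_le_rpow_of_nonpos (by positivity) ?_ (neg_nonpos.2 hp0)
          rw [pow_succ', div_mul_eq_mul_div, mul_div_assoc]
          gcongr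
      _ = (2 ^ (-p)) ^ (n + 1) * F x₀ := by rw [Real.rpow_pow_comm two_pos.le]
      _ ≤ F (2 ^ (n + 1) * x₀) := hpow (n + 1)
      _ ≤ F x := hanti ((div_lt_iff₀ hx₀).1 hn').le
  rw [Real.norm_of_nonneg (by positivity), Real.norm_of_nonneg (h0 x), div_mul_eq_mul_div,
    le_div_iff₀ hFx₀]
  calc x ^ (-p) * F x₀ = (2 / x₀) ^ p * ((2 / x₀ * x) ^ (-p) * F x₀) := by
        rw [Real.mul_rpow (by positivity) hx0.le, Real.rpow_neg (x := 2 / x₀) (by positivity)]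
        field_simp
    _ ≤ (2 / x₀) ^ p * F x := by gcongr

lemma exp_neg_mul_isLittleO (hF : RVtail F α) (h0 : ∀ x, 0 ≤ F x) (hanti : Antitone F)
    (hc : 0 < c) : (fun x => Real.exp (-c * x)) =o[atTop] F :=
  (isLittleO_exp_neg_mul_rpow_atTop hc _).trans_isBigO
    (hF.rpow_neg_isBigO h0 hanti (p := |α| + 1) (by positivity) (by linarith [le_abs_self α]))

end RVtail

section Tail

variable {Ω : Type*} [MeasurableSpace Ω] {μ : Measure Ω} {X M : Ω → ℝ} {α : ℝ}

lemma tailP_nonneg (x : ℝ) : 0 ≤ tailP μ X x :=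
  ENNReal.toReal_nonneg

lemma tailP_antitone [IsFiniteMeasure μ] : Antitone (tailP μ X) := fun _ _ h =>
  measureReal_mono fun _ hω => h.trans_lt hω

lemma ofReal_tailP [IsFiniteMeasure μ] (x : ℝ) : ENNReal.ofReal (tailP μ X x) = μ {ω | x < X ω} :=
  ofReal_measureReal

lemma Ioi_subset_iUnion_Ioc_pow_mul {b y : ℝ} (hb : 1 < b) (hy : 0 < y) :
    Ioi y ⊆ ⋃ j : ℕ, Ioc (b ^ j * y) (b ^ (j + 1) * y) := fun x hx => by
  have hratio : 1 < x / y := (one_lt_div hy).2 hx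
  obtain ⟨j, hj, hj'⟩ := exists_mem_Ioc_zpow (one_pos.trans hratio) hb
  lift j to ℕ using Int.lt_add_one_iff.1 ((one_lt_zpow_iff_right₀ hb).1 (hratio.trans_le hj'))
  exact mem_iUnion.2 ⟨j, (lt_div_iff₀ hy).1 (mod_cast hj), (div_le_iff₀ hy).1 (mod_cast hj')⟩

lemma setLIntegral_preimage_Ioc_le [IsFiniteMeasure μ] (u v : ℝ) :
    ∫⁻ ω in X ⁻¹' Ioc u v, .ofReal (X ω) ∂μ ≤ .ofReal v * .ofReal (tailP μ X u) :=
  calc ∫⁻ ω in X ⁻¹' Ioc u v, .ofReal (X ω) ∂μ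
      ≤ ∫⁻ _ in X ⁻¹' Ioc u v, .ofReal v ∂μ :=
        setLIntegral_mono measurable_const fun _ hω => ENNReal.ofReal_le_ofReal hω.2
    _ = .ofReal v * μ (X ⁻¹' Ioc u v) := setLIntegral_const _ _
    _ ≤ .ofReal v * .ofReal (tailP μ X u) := by
        rw [ofReal_tailP]
        gcongr
        exact fun _ hω => hω.1

-- Karamata's bound, by summing over the dyadic shells `2 ^ j * y < X ≤ 2 ^ (j + 1) * y`.
lemma RVtail.exists_setLIntegral_le [IsFiniteMeasure μ] (hF : RVtail (tailP μ X) α)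
    (hα : 1 < α) : ∃ C > 0, ∀ᶠ y in atTop,
      ∫⁻ ω in {ω | y < X ω}, .ofReal (X ω) ∂μ ≤ .ofReal (C * (y * tailP μ X y)) := by
  obtain ⟨q, hq, hq'⟩ : ∃ q : ℝ, 2 ^ (-α) < q ∧ q < 2⁻¹ :=
    exists_between (by
      simpa only [Real.rpow_neg_one] using
        Real.rpow_lt_rpow_of_exponent_lt one_lt_two (neg_lt_neg hα))
  have hq0 : 0 < q := (Real.rpow_pos_of_pos two_pos _).trans hq
  have hC : 0 < 1 - 2 * q := by linarith
  refine ⟨2 * (1 - 2 * q)⁻¹, by positivity, ?_⟩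
  filter_upwards [hF.eventually_forall_le_pow_mul tailP_nonneg one_le_two hq,
    eventually_gt_atTop 0] with y hy hy0
  have hF0 : 0 ≤ tailP μ X y := tailP_nonneg y
  have hsum : HasSum (fun j : ℕ => 2 * (y * tailP μ X y) * (2 * q) ^ j)
      (2 * (y * tailP μ X y) * (1 - 2 * q)⁻¹) :=
    (hasSum_geometric_of_lt_one (by positivity) (by linarith)).mul_left _
  have hshell (j : ℕ) : ∫⁻ ω in X ⁻¹' Ioc (2 ^ j * y) (2 ^ (j + 1) * y), .ofReal (X ω) ∂μ
      ≤ ENNReal.ofReal (2 * (y * tailP μ X y) * (2 * q) ^ j) := by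
    refine (setLIntegral_preimage_Ioc_le _ _).trans ?_
    rw [← ENNReal.ofReal_mul (by positivity)]
    refine ENNReal.ofReal_le_ofReal ((mul_le_mul_of_nonneg_left (hy j) (by positivity)).trans_eq ?_)
    ring
  calc ∫⁻ ω in X ⁻¹' Ioi y, .ofReal (X ω) ∂μ
      ≤ ∫⁻ ω in ⋃ j : ℕ, X ⁻¹' Ioc (2 ^ j * y) (2 ^ (j + 1) * y), .ofReal (X ω) ∂μ :=
        lintegral_mono_set <| preimage_iUnion ▸
          preimage_mono (Ioi_subset_iUnion_Ioc_pow_mul one_lt_two hy0)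
    _ ≤ ∑' j : ℕ, ∫⁻ ω in X ⁻¹' Ioc (2 ^ j * y) (2 ^ (j + 1) * y), .ofReal (X ω) ∂μ :=
        lintegral_iUnion_le _ _
    _ ≤ ∑' j, ENNReal.ofReal (2 * (y * tailP μ X y) * (2 * q) ^ j) := ENNReal.tsum_le_tsum hshell
    _ = .ofReal (2 * (1 - 2 * q)⁻¹ * (y * tailP μ X y)) := by
        rw [← ENNReal.ofReal_tsum_of_nonneg (fun j => by positivity) hsum.summable, hsum.tsum_eq,
          mul_right_comm]

lemma setLIntegral_lt_div_le (hX : Measurable X) (hM : Measurable M) (hM0 : ∀ ω, 0 < M ω)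
    {x A : ℝ} (hx : 0 < x) :
    ∫⁻ ω in {ω | x < X ω / M ω}, .ofReal (M ω) ∂μ
      ≤ .ofReal A * μ {ω | x < X ω / M ω}
        + .ofReal x⁻¹ * ∫⁻ ω in {ω | A * x < X ω}, .ofReal (X ω) ∂μ := by
  have hbound (ω) (hω : x < X ω / M ω) : ENNReal.ofReal (M ω) ≤ .ofReal A
      + .ofReal x⁻¹ * {ω | A * x < X ω}.indicator (fun ω => .ofReal (X ω)) ω := by
    have hMX : M ω ≤ x⁻¹ * X ω := by
      rw [inv_mul_eq_div, le_div_iff₀ hx]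
      exact ((lt_div_iff₀' (hM0 ω)).1 hω).le
    by_cases hA : M ω ≤ A
    · exact (ENNReal.ofReal_le_ofReal hA).trans le_self_add
    · have hmem : ω ∈ {ω | A * x < X ω} := by
        refine ((mul_lt_mul_iff_left₀ hx).2 (not_le.1 hA)).trans ?_
        exact (lt_div_iff₀' (hM0 ω)).1 hω
      rw [indicator_of_mem hmem, ← ENNReal.ofReal_mul (by positivity)]
      exact (ENNReal.ofReal_le_ofReal hMX).trans le_add_self
  have hmeas : MeasurableSet {ω | A * x < X ω} := measurableSet_lt measurable_const hX
  calc ∫⁻ ω in {ω | x < X ω / M ω}, .ofReal (M ω) ∂μ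
      ≤ ∫⁻ ω in {ω | x < X ω / M ω}, .ofReal A
          + .ofReal x⁻¹ * {ω | A * x < X ω}.indicator (fun ω => .ofReal (X ω)) ω ∂μ :=
        setLIntegral_mono' (measurableSet_lt measurable_const (hX.div hM)) hbound
    _ ≤ _ := by
        rw [lintegral_add_left measurable_const, setLIntegral_const,
          lintegral_const_mul _ (hX.ennreal_ofReal.indicator hmeas),
          ← lintegral_indicator hmeas]
        gcongr
        exact Measure.restrict_le_self

lemma eventually_setLIntegral_lt_div_le [IsFiniteMeasure μ] (hX : Measurable X) (hM : Measurable M)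
    (hM0 : ∀ ω, 0 < M ω) (hα : 1 < α) (hF : RVtail (tailP μ X) α)
    (ho : tailP μ (fun ω => X ω / M ω) =o[atTop] tailP μ X) {ε : ℝ} (hε : 0 < ε) :
    ∀ᶠ x in atTop,
      ∫⁻ ω in {ω | x < X ω / M ω}, .ofReal (M ω) ∂μ ≤ .ofReal (ε * tailP μ X x) := by
  obtain ⟨C, hC, hKaramata⟩ := hF.exists_setLIntegral_le hα
  obtain ⟨A, hA, hCA⟩ : ∃ A : ℝ, 0 < A ∧ A * A ^ (-α) < ε / 2 / C := by
    have hlim : Tendsto (fun A : ℝ => A ^ (-(α - 1))) atTop (nhds 0) :=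
      tendsto_rpow_neg_atTop (sub_pos.2 hα)
    obtain ⟨A, hA, hlt⟩ :=
      ((eventually_gt_atTop 0).and
        (hlim.eventually_lt_const (show 0 < ε / 2 / C by positivity))).exists
    refine ⟨A, hA, ?_⟩
    rwa [← Real.rpow_one_add' hA.le (by linarith), show 1 + -α = -(α - 1) by ring]
  have hFA := hF.eventually_le_mul tailP_nonneg hA (c := ε / 2 / C / A)
    ((lt_div_iff₀' hA).2 hCA)
  have hratio := ho.bound (c := ε / 2 / A) (by positivity)
  filter_upwards [(tendsto_id.const_mul_atTop hA).eventually hKaramata, hFA, hratio,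
    eventually_gt_atTop 0] with x hK hFAx hr hx
  rw [Real.norm_of_nonneg (tailP_nonneg x), Real.norm_of_nonneg (tailP_nonneg x)] at hr
  calc ∫⁻ ω in {ω | x < X ω / M ω}, .ofReal (M ω) ∂μ
      ≤ .ofReal A * .ofReal (ε / 2 / A * tailP μ X x)
        + .ofReal x⁻¹ * .ofReal (C * (A * x * (ε / 2 / C / A * tailP μ X x))) := by
        refine (setLIntegral_lt_div_le hX hM hM0 hx (A := A)).trans ?_
        gcongr
        · exact (ofReal_tailP (μ := μ) (X := fun ω => X ω / M ω) x).symm.trans_le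
            (ENNReal.ofReal_le_ofReal hr)
        · exact hK.trans (by simp only [id]; gcongr)
    _ = .ofReal (ε * tailP μ X x) := by
        have hF0 := tailP_nonneg (μ := μ) (X := X) x
        rw [← ENNReal.ofReal_mul hA.le, ← ENNReal.ofReal_mul (by positivity),
          ← ENNReal.ofReal_add (by positivity) (by positivity)]
        congr 1
        field_simp
        ring

end Tail

section Poisson

open scoped NNReal

lemma integrable_exp_mul_poissonMeasure (r : ℝ≥0) (s : ℝ) :
    Integrable (fun n : ℕ => Real.exp (s * n)) Po(r) := by
  refine integrable_poissonMeasure_iff.2 (((Real.summable_pow_div_factorial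
    (r * Real.exp s)).mul_left (Real.exp (-r))).congr fun n => ?_)
  rw [Real.norm_of_nonneg (by positivity), mul_pow, ← Real.exp_nat_mul, mul_comm s]
  ring

lemma mgf_poissonMeasure (r : ℝ≥0) (s : ℝ) :
    mgf (fun n : ℕ => (n : ℝ)) Po(r) s = Real.exp (r * (Real.exp s - 1)) := by
  have hexp := (NormedSpace.expSeries_div_hasSum_exp (r * Real.exp s)).mul_left (Real.exp (-r))
  rw [← Real.exp_eq_exp_ℝ] at hexp
  refine (hasSum_integral_poissonMeasure (integrable_exp_mul_poissonMeasure r s)).unique ?_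
  rw [mul_sub_one, sub_eq_neg_add, Real.exp_add]
  refine hexp.congr_fun fun n => ?_
  rw [smul_eq_mul, mul_pow, ← Real.exp_nat_mul, mul_comm s]
  ring

lemma poissonMeasure_real_le_exp (r : ℝ≥0) (x : ℝ) :
    Po(r).real {n : ℕ | (n : ℝ) ≤ x} ≤ Real.exp (x - r / 2) := by
  refine (measure_le_le_exp_mul_mgf x (t := -1) (by norm_num)
    (integrable_exp_mul_poissonMeasure r _)).trans ?_
  rw [mgf_poissonMeasure, ← Real.exp_add]
  gcongr
  nlinarith [Real.exp_neg_one_lt_half, r.coe_nonneg]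

lemma half_le_poissonMeasure {r : ℝ≥0} {x : ℝ} (hx : 1 ≤ x) (hr : 4 * x ≤ r) :
    2⁻¹ ≤ Po(r) {n : ℕ | x < n} := by
  have hcompl : Po(r).real {n : ℕ | (n : ℝ) ≤ x} ≤ 2⁻¹ :=
    calc Po(r).real {n : ℕ | (n : ℝ) ≤ x} ≤ Real.exp (x - r / 2) := poissonMeasure_real_le_exp r x
      _ ≤ Real.exp (-1) := by gcongr; linarith
      _ ≤ 2⁻¹ := by simpa only [one_div] using Real.exp_neg_one_lt_half.le
  have hsum := probReal_add_probReal_compl (μ := Po(r)) (s := {n : ℕ | (n : ℝ) ≤ x}) .of_discrete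
  simp only [compl_ofPred, not_le] at hsum
  rw [← ENNReal.ofReal_ofNat, ← ENNReal.ofReal_inv_of_pos two_pos, ← ofReal_measureReal]
  exact ENNReal.ofReal_le_ofReal (by linarith)

lemma integrable_exp_mul_sub_poissonMeasure_prod (r₁ r₂ : ℝ≥0) (s x : ℝ) :
    Integrable (fun p : ℕ × ℕ => Real.exp (s * (p.1 - x * p.2))) (Po(r₁).prod Po(r₂)) := by
  refine ((integrable_exp_mul_poissonMeasure r₁ s).mul_prod
    (integrable_exp_mul_poissonMeasure r₂ (-(s * x)))).congr (.of_forall fun p => ?_)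
  simp only [← Real.exp_add]
  ring_nf

lemma mgf_sub_poissonMeasure_prod (r₁ r₂ : ℝ≥0) (s x : ℝ) :
    mgf (fun p : ℕ × ℕ => (p.1 - x * p.2 : ℝ)) (Po(r₁).prod Po(r₂)) s
      = Real.exp (r₁ * (Real.exp s - 1) + r₂ * (Real.exp (-(s * x)) - 1)) := by
  rw [Real.exp_add, ← mgf_poissonMeasure, ← mgf_poissonMeasure, mgf, mgf, mgf, ← integral_prod_mul]
  refine integral_congr_ae (.of_forall fun p => ?_)
  simp only [← Real.exp_add]
  ring_nf

-- Chernoff's bound; the two regimes below are `s = 1` and `s = 1 / x`.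
lemma poissonMeasure_prod_real_le_exp (r₁ r₂ : ℝ≥0) {s x : ℝ} (hs0 : 0 ≤ s) (hs1 : s ≤ 1)
    (hsx : 1 ≤ s * x) :
    (Po(r₁).prod Po(r₂)).real {p : ℕ × ℕ | x * (p.2 + 1) < p.1}
      ≤ Real.exp (2 * s * r₁ - r₂ / 2 - s * x) := by
  have hexp : Real.exp s - 1 ≤ 2 * s := by
    have := (le_abs_self _).trans (Real.abs_exp_sub_one_le (abs_le.2 ⟨by linarith, hs1⟩))
    rwa [abs_of_nonneg hs0] at this
  have hexp' : Real.exp (-(s * x)) - 1 ≤ -(1 / 2) := by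
    linarith [Real.exp_le_exp.2 (neg_le_neg hsx), Real.exp_neg_one_lt_half]
  calc (Po(r₁).prod Po(r₂)).real {p : ℕ × ℕ | x * (p.2 + 1) < p.1}
      ≤ (Po(r₁).prod Po(r₂)).real {p : ℕ × ℕ | x ≤ p.1 - x * p.2} :=
        measureReal_mono fun p (hp : x * (p.2 + 1) < p.1) => by
          rw [mem_ofPred_eq]; linarith
    _ ≤ Real.exp (-s * x) * Real.exp (r₁ * (Real.exp s - 1) + r₂ * (Real.exp (-(s * x)) - 1)) := by
        rw [← mgf_sub_poissonMeasure_prod]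
        exact measure_ge_le_exp_mul_mgf x hs0 (integrable_exp_mul_sub_poissonMeasure_prod ..)
    _ ≤ Real.exp (2 * s * r₁ - r₂ / 2 - s * x) := by
        rw [← Real.exp_add]
        gcongr
        nlinarith [r₁.coe_nonneg, r₂.coe_nonneg]

lemma poissonMeasure_prod_real_le_of_le {r₁ r₂ : ℝ≥0} {x : ℝ} (hx : 1 ≤ x) (hr : r₁ ≤ x / 4) :
    (Po(r₁).prod Po(r₂)).real {p : ℕ × ℕ | x * (p.2 + 1) < p.1}
      ≤ Real.exp (-(1 / 2) * x) * Real.exp (-(r₂ / 2)) := by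
  refine (poissonMeasure_prod_real_le_exp r₁ r₂ zero_le_one le_rfl (by linarith)).trans ?_
  rw [← Real.exp_add]
  gcongr
  linarith

lemma poissonMeasure_prod_real_le_of_le_mul {r₁ r₂ : ℝ≥0} {x : ℝ} (hx : 1 ≤ x)
    (hr : r₁ ≤ x * r₂ / 8) :
    (Po(r₁).prod Po(r₂)).real {p : ℕ × ℕ | x * (p.2 + 1) < p.1} ≤ Real.exp (-(r₂ / 4)) := by
  have hx0 : 0 < x := one_pos.trans_le hx
  have hr' : x⁻¹ * r₁ ≤ r₂ / 8 := by
    rw [inv_mul_le_iff₀ hx0]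
    linarith
  refine (poissonMeasure_prod_real_le_exp r₁ r₂ (inv_nonneg.2 hx0.le) (inv_le_one_of_one_le₀ hx)
    (inv_mul_cancel₀ hx0.ne').ge).trans ?_
  gcongr
  rw [inv_mul_cancel₀ hx0.ne']
  linarith

end Poisson

section Disintegration

open scoped NNReal

lemma measure_ext_prod_singleton {β γ : Type*} [MeasurableSpace β] [MeasurableSpace γ] [Countable γ]
    [MeasurableSingletonClass γ] {ρ ν : Measure (β × γ)}
    (h : ∀ s, MeasurableSet s → ∀ c, ρ (s ×ˢ {c}) = ν (s ×ˢ {c})) : ρ = ν := by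
  ext u hu
  have hslice (c : γ) : MeasurableSet {b | (b, c) ∈ u} := measurable_prodMk_right hu
  have hdisj : Pairwise (Function.onFun Disjoint fun c => {b | (b, c) ∈ u} ×ˢ ({c} : Set γ)) :=
    fun c d hcd => Set.disjoint_prod.2 (.inr (disjoint_singleton.2 hcd))
  have hu_eq : u = ⋃ c, {b | (b, c) ∈ u} ×ˢ {c} := by
    ext ⟨b, c⟩
    simp
  rw [hu_eq, measure_iUnion hdisj fun c => (hslice c).prod (.singleton c),
    measure_iUnion hdisj fun c => (hslice c).prod (.singleton c)]
  exact tsum_congr fun c => h _ (hslice c) c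

variable {Ω β γ : Type*} [MeasurableSpace Ω] [MeasurableSpace β] [MeasurableSpace γ]
  {μ : Measure Ω} {T : Ω → β} {Z : Ω → γ} {κ : Kernel β γ}

lemma hasCondDistrib_of_forall_singleton [SFinite μ] [IsSFiniteKernel κ] [Countable γ]
    [MeasurableSingletonClass γ] (hT : Measurable T) (hZ : Measurable Z)
    (h : ∀ s, MeasurableSet s → ∀ c,
      μ {ω | T ω ∈ s ∧ Z ω = c} = ∫⁻ ω in T ⁻¹' s, κ (T ω) {c} ∂μ) :
    HasCondDistrib Z T κ μ where
  map_eq := measure_ext_prod_singleton fun s hs c => by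
    rw [Measure.map_apply (hT.prodMk hZ) (hs.prod (.singleton c)),
      Measure.compProd_apply_prod hs (.singleton c),
      setLIntegral_map hs (κ.measurable_coe (.singleton c)) hT]
    exact h s hs c

lemma setLIntegral_preimage_of_hasCondDistrib [SFinite μ] [IsSFiniteKernel κ]
    (h : HasCondDistrib Z T κ μ) {g : β → ENNReal} (hg : Measurable g) {s : Set γ}
    (hs : MeasurableSet s) :
    ∫⁻ ω in Z ⁻¹' s, g (T ω) ∂μ = ∫⁻ ω, g (T ω) * κ (T ω) s ∂μ := by
  let f : β × γ → ENNReal := (Prod.snd ⁻¹' s).indicator (g ∘ Prod.fst)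
  have hf : Measurable f := (hg.comp measurable_fst).indicator (measurable_snd hs)
  calc ∫⁻ ω in Z ⁻¹' s, g (T ω) ∂μ
      = ∫⁻ ω, f (T ω, Z ω) ∂μ :=
        (lintegral_indicator₀ (h.aemeasurable_snd.nullMeasurableSet_preimage hs) _).symm
    _ = ∫⁻ ω, ∫⁻ z, f (T ω, z) ∂κ (T ω) ∂μ := by
        rw [← lintegral_map' hf.aemeasurable h.aemeasurable, h.map_eq,
          Measure.lintegral_compProd hf,
          lintegral_map' hf.lintegral_kernel_prod_right'.aemeasurable h.aemeasurable_fst]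
    _ = ∫⁻ ω, g (T ω) * κ (T ω) s ∂μ :=
        lintegral_congr fun ω => lintegral_indicator_const hs (g (T ω))

/-- The Poisson distribution as a Markov kernel in its rate. -/
noncomputable def poissonRateKernel : Kernel ℝ≥0 ℕ where
  toFun r := Po(r)
  measurable' := Measure.measurable_of_measurable_coe _ fun s _ => by
    simp only [poissonMeasure, Measure.sum_apply_of_countable, Measure.smul_apply]
    fun_prop

lemma poissonRateKernel_apply (r : ℝ≥0) : poissonRateKernel r = Po(r) := rfl

instance : IsMarkovKernel poissonRateKernel :=
  ⟨fun r => inferInstanceAs (IsProbabilityMeasure Po(r))⟩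

lemma poissonMeasure_prod_real_singleton (r₁ r₂ : ℝ≥0) (m n : ℕ) :
    (Po(r₁).prod Po(r₂)).real {(m, n)} = poissonPdf r₁ m * poissonPdf r₂ n := by
  rw [← singleton_prod_singleton, measureReal_prod_prod, poissonMeasure_real_singleton,
    poissonMeasure_real_singleton, poissonPdf, poissonPdf]

lemma hasCondDistrib_poisson_prod [IsFiniteMeasure μ] {Z₁ Z₂ : Ω → ℕ} {r₁ r₂ : β → ℝ≥0}
    (hT : Measurable T) (hZ₁ : Measurable Z₁) (hZ₂ : Measurable Z₂)
    (hr₁ : Measurable r₁) (hr₂ : Measurable r₂)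
    (h : ∀ (m n : ℕ) (s : Set β), MeasurableSet s →
      (μ {ω | Z₁ ω = m ∧ Z₂ ω = n ∧ T ω ∈ s}).toReal
        = ∫ ω in {ω | T ω ∈ s}, poissonPdf (r₁ (T ω)) m * poissonPdf (r₂ (T ω)) n ∂μ) :
    HasCondDistrib (fun ω => (Z₁ ω, Z₂ ω)) T
      (poissonRateKernel.comap r₁ hr₁ ×ₖ poissonRateKernel.comap r₂ hr₂) μ := by
  set κ := poissonRateKernel.comap r₁ hr₁ ×ₖ poissonRateKernel.comap r₂ hr₂
  refine hasCondDistrib_of_forall_singleton hT (hZ₁.prodMk hZ₂) fun s hs ⟨m, n⟩ => ?_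
  have hpdf (t : β) : (κ t {(m, n)}).toReal = poissonPdf (r₁ t) m * poissonPdf (r₂ t) n := by
    simp only [κ, Kernel.prod_apply, Kernel.comap_apply, poissonRateKernel_apply]
    exact poissonMeasure_prod_real_singleton ..
  have hfin : ∫⁻ ω in T ⁻¹' s, κ (T ω) {(m, n)} ∂μ ≠ ⊤ :=
    ((lintegral_mono fun _ => prob_le_one).trans_lt (by simp)).ne
  have hevent : {ω | T ω ∈ s ∧ (Z₁ ω, Z₂ ω) = (m, n)} = {ω | Z₁ ω = m ∧ Z₂ ω = n ∧ T ω ∈ s} := by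
    ext ω
    simp only [Prod.mk.injEq, mem_ofPred_eq]
    tauto
  have hmeas : AEMeasurable (fun ω => κ (T ω) {(m, n)}) (μ.restrict (T ⁻¹' s)) :=
    ((κ.measurable_coe (.singleton _)).comp hT).aemeasurable
  rw [hevent, ← ENNReal.toReal_eq_toReal_iff' (measure_ne_top _ _) hfin, h m n s hs,
    ← integral_toReal hmeas (.of_forall fun _ => measure_lt_top _ _)]
  simp only [hpdf]
  rfl

end Disintegration

section MixedPoisson

/-- The law of two independent Poisson variables with rates `a * w.1` and `b * w.2`, as a kernel in
the weights `w`; negative rates are truncated to `0`. -/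
noncomputable def poissonPairKernel (a b : ℝ) : Kernel (ℝ × ℝ) (ℕ × ℕ) :=
  poissonRateKernel.comap (fun w : ℝ × ℝ => (a * w.1).toNNReal) (by fun_prop)
    ×ₖ poissonRateKernel.comap (fun w : ℝ × ℝ => (b * w.2).toNNReal) (by fun_prop)

variable {a b : ℝ}

instance : IsMarkovKernel (poissonPairKernel a b) := by
  unfold poissonPairKernel
  infer_instance

lemma poissonPairKernel_apply (w : ℝ × ℝ) :
    poissonPairKernel a b w = Po((a * w.1).toNNReal).prod Po((b * w.2).toNNReal) := by
  simp only [poissonPairKernel, Kernel.prod_apply, Kernel.comap_apply, poissonRateKernel_apply]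

lemma ofReal_mul_poissonPairKernel_le_of_le (ha : 0 < a) (hb : 0 < b) {w : ℝ × ℝ} {x : ℝ}
    (hx : 1 ≤ x) (hw : w.1 ≤ (4 * a)⁻¹ * x) :
    .ofReal w.2 * poissonPairKernel a b w {z | x * (z.2 + 1) < z.1}
      ≤ ENNReal.ofReal (2 / b * Real.exp (-(1 / 2) * x)) := by
  rcases le_or_gt w.2 0 with hw₂ | hw₂
  · simp [ENNReal.ofReal_of_nonpos hw₂]
  have hr₁ : ((a * w.1).toNNReal : ℝ) ≤ x / 4 := by
    rw [Real.coe_toNNReal']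
    refine max_le ?_ (by linarith)
    calc a * w.1 ≤ a * ((4 * a)⁻¹ * x) := by gcongr
      _ = x / 4 := by field_simp
  have hexp : w.2 * Real.exp (-(b * w.2 / 2)) ≤ 2 / b := by
    rw [Real.exp_neg, ← div_eq_mul_inv, div_le_div_iff₀ (Real.exp_pos _) hb]
    linarith [Real.add_one_le_exp (b * w.2 / 2)]
  have hprob := poissonMeasure_prod_real_le_of_le (r₂ := (b * w.2).toNNReal) hx hr₁
  rw [Real.coe_toNNReal _ (by positivity)] at hprob
  rw [poissonPairKernel_apply, ← ofReal_measureReal, ← ENNReal.ofReal_mul hw₂.le]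
  gcongr ENNReal.ofReal ?_
  calc w.2 * _ ≤ w.2 * (Real.exp (-(1 / 2) * x) * Real.exp (-(b * w.2 / 2))) := by gcongr
    _ = w.2 * Real.exp (-(b * w.2 / 2)) * Real.exp (-(1 / 2) * x) := by ring
    _ ≤ 2 / b * Real.exp (-(1 / 2) * x) := by gcongr

lemma exists_ofReal_mul_poissonPairKernel_le (hb : 0 < b) {η : ℝ} (hη : 0 < η) :
    ∃ M > 0, ∀ (w : ℝ × ℝ) (x : ℝ), 1 ≤ x → M ≤ w.2 → a * w.1 ≤ x * (b * w.2) / 8 →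
      .ofReal w.2 * poissonPairKernel a b w {z | x * (z.2 + 1) < z.1} ≤ ENNReal.ofReal η := by
  have hlim : Tendsto (fun w : ℝ => w * Real.exp (-(b * w / 4))) atTop (nhds 0) := by
    refine (tendsto_rpow_mul_exp_neg_mul_atTop_nhds_zero 1 (b / 4) (by positivity)).congr
      fun w => ?_
    rw [Real.rpow_one]
    ring_nf
  obtain ⟨M, hM⟩ := eventually_atTop.1 (hlim.eventually_le_const hη)
  refine ⟨max M 1, by positivity, fun w x hx hw hr => ?_⟩
  have hw₂ : 0 < w.2 := one_pos.trans_le ((le_max_right ..).trans hw)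
  have hr₁ : ((a * w.1).toNNReal : ℝ) ≤ x * (b * w.2).toNNReal / 8 := by
    rw [Real.coe_toNNReal', Real.coe_toNNReal _ (by positivity)]
    exact max_le hr (by positivity)
  have hprob := poissonMeasure_prod_real_le_of_le_mul hx hr₁
  rw [Real.coe_toNNReal _ (by positivity)] at hprob
  rw [poissonPairKernel_apply, ← ofReal_measureReal, ← ENNReal.ofReal_mul hw₂.le]
  gcongr ENNReal.ofReal ?_
  exact (mul_le_mul_of_nonneg_left hprob hw₂.le).trans (hM _ ((le_max_left ..).trans hw))

-- A large `w.1` with `w.1 / max w.2 1` small forces `w.2` to be large.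
lemma exists_ofReal_mul_poissonPairKernel_le_of_div_le (ha : 0 < a) (hb : 0 < b) {δ η : ℝ}
    (hδ : 0 < δ) (hη : 0 < η) :
    ∃ lam > 0, ∀ (w : ℝ × ℝ) (x : ℝ), 1 ≤ x → δ * x < w.1 → w.1 / max w.2 1 ≤ lam * x →
      .ofReal w.2 * poissonPairKernel a b w {z | x * (z.2 + 1) < z.1} ≤ ENNReal.ofReal η := by
  obtain ⟨M, hM, hbound⟩ := exists_ofReal_mul_poissonPairKernel_le (a := a) hb hη
  refine ⟨min (b / (8 * a)) (δ / max M 1), by positivity, fun w x hx hδw hw => ?_⟩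
  have hx0 : 0 < x := one_pos.trans_le hx
  have hmax : 0 < max w.2 1 := by positivity
  rw [div_le_iff₀ hmax] at hw
  have hlarge : max M 1 < max w.2 1 := by
    have : δ * x < δ / max M 1 * x * max w.2 1 :=
      hδw.trans_le (hw.trans (by gcongr; exact min_le_right _ _))
    rw [div_mul_eq_mul_div, div_mul_eq_mul_div, lt_div_iff₀ (by positivity)] at this
    exact lt_of_mul_lt_mul_left this (by positivity)
  have hw₂ : max w.2 1 = w.2 := max_eq_left (by
    by_contra! h
    exact (le_max_right M 1).not_gt (hlarge.trans_eq (max_eq_right h.le)))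
  rw [hw₂] at hlarge hw
  refine hbound w x hx ((le_max_left ..).trans hlarge.le) ?_
  calc a * w.1 ≤ a * (b / (8 * a) * x * w.2) := by
        have : 0 < w.2 := hw₂ ▸ hmax
        gcongr
        exact hw.trans (by gcongr; exact min_le_left _ _)
    _ = x * (b * w.2) / 8 := by field_simp

lemma exists_ofReal_mul_poissonPairKernel_le_add (ha : 0 < a) (hb : 0 < b) {η : ℝ} (hη : 0 < η) :
    ∃ lam > 0, ∀ (w : ℝ × ℝ) (x : ℝ), 1 ≤ x →
      .ofReal w.2 * poissonPairKernel a b w {z | x * (z.2 + 1) < z.1}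
        ≤ ENNReal.ofReal (2 / b * Real.exp (-(1 / 2) * x))
          + {w | (4 * a)⁻¹ * x < w.1}.indicator (fun _ => ENNReal.ofReal η) w
          + {w | lam * x < w.1 / max w.2 1}.indicator (fun w => .ofReal (max w.2 1)) w := by
  obtain ⟨lam, hlam, hbound⟩ := exists_ofReal_mul_poissonPairKernel_le_of_div_le ha hb
    (show 0 < (4 * a)⁻¹ by positivity) hη
  refine ⟨lam, hlam, fun w x hx => ?_⟩
  rcases le_or_gt w.1 ((4 * a)⁻¹ * x) with hsmall | hlarge
  · exact (ofReal_mul_poissonPairKernel_le_of_le ha hb hx hsmall).trans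
      (le_self_add.trans le_self_add)
  rcases le_or_gt (w.1 / max w.2 1) (lam * x) with hratio | hratio
  · rw [indicator_of_mem (show w ∈ {w | (4 * a)⁻¹ * x < w.1} from hlarge)]
    exact (hbound w x hx hlarge hratio).trans (le_add_self.trans le_self_add)
  · rw [indicator_of_mem (show w ∈ {w | lam * x < w.1 / max w.2 1} from hratio)]
    refine le_trans ?_ le_add_self
    exact (mul_le_of_le_one_right' prob_le_one).trans (ENNReal.ofReal_le_ofReal (le_max_left ..))

variable {Ω : Type*} [MeasurableSpace Ω] {μ : Measure Ω} [IsProbabilityMeasure μ]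
  {W₁ W₂ : Ω → ℝ} {Z₁ Z₂ : Ω → ℕ} {α : ℝ}

lemma exists_setLIntegral_poissonPair_le (hW₁ : Measurable W₁) (hW₂ : Measurable W₂)
    (ha : 0 < a) (hb : 0 < b)
    (hZ : HasCondDistrib (fun ω => (Z₁ ω, Z₂ ω)) (fun ω => (W₁ ω, W₂ ω))
      (poissonPairKernel a b) μ) {η : ℝ} (hη : 0 < η) :
    ∃ lam > 0, ∀ x : ℝ, 1 ≤ x → ∫⁻ ω in {ω | x * (Z₂ ω + 1) < Z₁ ω}, .ofReal (W₂ ω) ∂μ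
      ≤ .ofReal (2 / b * Real.exp (-(1 / 2) * x))
        + .ofReal η * .ofReal (tailP μ W₁ ((4 * a)⁻¹ * x))
        + ∫⁻ ω in {ω | lam * x < W₁ ω / max (W₂ ω) 1}, .ofReal (max (W₂ ω) 1) ∂μ := by
  obtain ⟨lam, hlam, hbound⟩ := exists_ofReal_mul_poissonPairKernel_le_add ha hb hη
  refine ⟨lam, hlam, fun x hx => ?_⟩
  have hmax : Measurable fun ω => max (W₂ ω) 1 := hW₂.max measurable_const
  have hlarge : MeasurableSet {ω | (4 * a)⁻¹ * x < W₁ ω} := measurableSet_lt measurable_const hW₁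
  have hratio : MeasurableSet {ω | lam * x < W₁ ω / max (W₂ ω) 1} :=
    measurableSet_lt measurable_const (hW₁.div hmax)
  calc ∫⁻ ω in {ω | x * (Z₂ ω + 1) < Z₁ ω}, .ofReal (W₂ ω) ∂μ
      = ∫⁻ ω, .ofReal (W₂ ω) * poissonPairKernel a b (W₁ ω, W₂ ω) {z | x * (z.2 + 1) < z.1} ∂μ :=
        setLIntegral_preimage_of_hasCondDistrib hZ measurable_snd.ennreal_ofReal
          (s := {z : ℕ × ℕ | x * (z.2 + 1) < z.1}) .of_discrete
    _ ≤ ∫⁻ ω, .ofReal (2 / b * Real.exp (-(1 / 2) * x))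
          + {ω | (4 * a)⁻¹ * x < W₁ ω}.indicator (fun _ => .ofReal η) ω
          + {ω | lam * x < W₁ ω / max (W₂ ω) 1}.indicator
              (fun ω => .ofReal (max (W₂ ω) 1)) ω ∂μ :=
        lintegral_mono fun ω => hbound (W₁ ω, W₂ ω) x hx
    _ = _ := by
        rw [lintegral_add_right _ (hmax.ennreal_ofReal.indicator hratio),
          lintegral_add_left measurable_const, lintegral_indicator_const hlarge,
          lintegral_indicator hratio, lintegral_const, measure_univ, mul_one, ofReal_tailP]

lemma eventually_setLIntegral_poissonPair_le (hW₁ : Measurable W₁) (hW₂ : Measurable W₂)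
    (ha : 0 < a) (hb : 0 < b) (hα : 1 < α) (hF : RVtail (tailP μ W₁) α)
    (ho : tailP μ (fun ω => W₁ ω / max (W₂ ω) 1) =o[atTop] tailP μ W₁)
    (hZ : HasCondDistrib (fun ω => (Z₁ ω, Z₂ ω)) (fun ω => (W₁ ω, W₂ ω))
      (poissonPairKernel a b) μ) {ε : ℝ} (hε : 0 < ε) :
    ∀ᶠ x : ℝ in atTop, ∫⁻ ω in {ω | x * (Z₂ ω + 1) < Z₁ ω}, .ofReal (W₂ ω) ∂μ
      ≤ .ofReal (ε * tailP μ W₁ x) := by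
  set F := tailP μ W₁
  have hF0 : ∀ x, 0 ≤ F x := tailP_nonneg
  obtain ⟨K, hK, hFδ⟩ := (hF.isBigO_comp_mul (lam := (4 * a)⁻¹) (by positivity)).exists_pos
  obtain ⟨lam, hlam, hbound⟩ :=
    exists_setLIntegral_poissonPair_le hW₁ hW₂ ha hb hZ (η := ε / 3 / K) (by positivity)
  obtain ⟨K', hK', hFlam⟩ := (hF.isBigO_comp_mul hlam).exists_pos
  have hexp := (hF.exp_neg_mul_isLittleO hF0 tailP_antitone one_half_pos).const_mul_left (2 / b)
  have hratio : ∀ᶠ x in atTop,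
      ∫⁻ ω in {ω | lam * x < W₁ ω / max (W₂ ω) 1}, .ofReal (max (W₂ ω) 1) ∂μ
        ≤ .ofReal (ε / 3 / K' * F (lam * x)) :=
    (tendsto_id.const_mul_atTop hlam).eventually <|
      eventually_setLIntegral_lt_div_le hW₁ (hW₂.max measurable_const) (fun ω => by positivity)
        hα hF ho (by positivity)
  filter_upwards [hFδ.bound, hFlam.bound, hexp.bound (c := ε / 3) (by positivity), hratio,
    eventually_ge_atTop 1] with x hxδ hxlam hxexp hxratio hx
  rw [Real.norm_of_nonneg (hF0 _), Real.norm_of_nonneg (hF0 _)] at hxδ hxlam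
  rw [Real.norm_of_nonneg (by positivity), Real.norm_of_nonneg (hF0 _)] at hxexp
  calc _ ≤ .ofReal (2 / b * Real.exp (-(1 / 2) * x))
          + .ofReal (ε / 3 / K) * .ofReal (F ((4 * a)⁻¹ * x))
          + ∫⁻ ω in {ω | lam * x < W₁ ω / max (W₂ ω) 1}, .ofReal (max (W₂ ω) 1) ∂μ := hbound x hx
    _ ≤ .ofReal (ε / 3 * F x) + .ofReal (ε / 3 / K) * .ofReal (K * F x)
          + .ofReal (ε / 3 / K' * (K' * F x)) := by
        gcongr
        exact hxratio.trans (by gcongr)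
    _ = .ofReal (ε * F x) := by
        have := hF0 x
        rw [← ENNReal.ofReal_mul (by positivity), ← ENNReal.ofReal_add (by positivity)
          (by positivity), ← ENNReal.ofReal_add (by positivity) (by positivity)]
        congr 1
        field_simp
        ring

lemma half_le_poissonPairKernel (ha : 0 < a) {w : ℝ × ℝ} {x : ℝ} (hx : 1 ≤ x)
    (hw : 4 / a * x < w.1) : 2⁻¹ ≤ poissonPairKernel a b w {z | x < z.1} := by
  have hrate : 4 * x ≤ (a * w.1).toNNReal := by
    rw [div_mul_eq_mul_div, div_lt_iff₀' ha] at hw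
    exact hw.le.trans (Real.le_coe_toNNReal _)
  calc 2⁻¹ ≤ Po((a * w.1).toNNReal) {n : ℕ | x < n} := half_le_poissonMeasure hx hrate
    _ = poissonPairKernel a b w ({n : ℕ | x < n} ×ˢ univ) := by
      rw [poissonPairKernel_apply, Measure.prod_prod, measure_univ, mul_one]
    _ = poissonPairKernel a b w {z | x < z.1} := by rw [prod_univ]; rfl

lemma tailP_le_two_mul_tailP_poisson (hW₁ : Measurable W₁) (ha : 0 < a)
    (hZ : HasCondDistrib (fun ω => (Z₁ ω, Z₂ ω)) (fun ω => (W₁ ω, W₂ ω))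
      (poissonPairKernel a b) μ) {x : ℝ} (hx : 1 ≤ x) :
    tailP μ W₁ (4 / a * x) ≤ 2 * tailP μ (fun ω => (Z₁ ω : ℝ)) x := by
  rw [← inv_mul_le_iff₀ two_pos, ← ENNReal.ofReal_le_ofReal_iff (tailP_nonneg x),
    ENNReal.ofReal_mul (by positivity), ENNReal.ofReal_inv_of_pos two_pos, ENNReal.ofReal_ofNat]
  have hmeas : MeasurableSet {ω | 4 / a * x < W₁ ω} := measurableSet_lt measurable_const hW₁
  calc 2⁻¹ * .ofReal (tailP μ W₁ (4 / a * x))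
      = ∫⁻ _ in {ω | 4 / a * x < W₁ ω}, 2⁻¹ ∂μ := by rw [setLIntegral_const, ofReal_tailP]
    _ ≤ ∫⁻ ω in {ω | 4 / a * x < W₁ ω}, poissonPairKernel a b (W₁ ω, W₂ ω) {z | x < z.1} ∂μ :=
        setLIntegral_mono' hmeas fun ω hω => half_le_poissonPairKernel ha hx hω
    _ ≤ ∫⁻ ω, 1 * poissonPairKernel a b (W₁ ω, W₂ ω) {z | x < z.1} ∂μ := by
        simpa only [one_mul] using setLIntegral_le_lintegral _ _
    _ = ∫⁻ _ in {ω | x < Z₁ ω}, 1 ∂μ :=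
        (setLIntegral_preimage_of_hasCondDistrib hZ measurable_const .of_discrete).symm
    _ = .ofReal (tailP μ (fun ω => (Z₁ ω : ℝ)) x) := by rw [setLIntegral_one, ofReal_tailP]

lemma RVtail.isBigO_tailP_poisson (hF : RVtail (tailP μ W₁) α) (hW₁ : Measurable W₁) (ha : 0 < a)
    (hZ : HasCondDistrib (fun ω => (Z₁ ω, Z₂ ω)) (fun ω => (W₁ ω, W₂ ω))
      (poissonPairKernel a b) μ) :
    tailP μ W₁ =O[atTop] tailP μ fun ω => (Z₁ ω : ℝ) := by
  refine (hF.isBigO_self_comp_mul (show 0 < 4 / a by positivity)).trans (.of_bound 2 ?_)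
  filter_upwards [eventually_ge_atTop 1] with x hx
  rw [Real.norm_of_nonneg (tailP_nonneg _), Real.norm_of_nonneg (tailP_nonneg _)]
  exact tailP_le_two_mul_tailP_poisson hW₁ ha hZ hx

end MixedPoisson

theorem ird_size_biased_NC_negligible_general {Ω : Type*} [MeasurableSpace Ω] {μ : Measure Ω}
    [IsProbabilityMeasure μ] {Wm Wp ζ : Ω → ℝ} {Zm Zp : Ω → ℕ} {a b α : ℝ}
    (hWm : Measurable Wm) (hWp : Measurable Wp) (hζ : Measurable ζ)
    (hZm : Measurable Zm) (hZp : Measurable Zp)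
    (hWm0 : ∀ᵐ ω ∂μ, 0 ≤ Wm ω) (hWp0 : ∀ᵐ ω ∂μ, 0 ≤ Wp ω) (hζ1 : ∀ᵐ ω ∂μ, ζ ω ≤ 1)
    (ha : 0 < a) (hb : 0 < b)
    (hcond : ∀ (m n : ℕ) (s : Set (ℝ × ℝ)), MeasurableSet s →
      (μ {ω | Zm ω = m ∧ Zp ω = n ∧ (Wm ω, Wp ω) ∈ s}).toReal
        = ∫ ω in {ω | (Wm ω, Wp ω) ∈ s}, poissonPdf (a * Wm ω) m * poissonPdf (b * Wp ω) n ∂μ)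
    (hα : 1 < α) (hRV : RVtail (tailP μ Wm) α)
    (ho : tailP μ (fun ω => Wm ω / max (Wp ω) 1) =o[atTop] tailP μ Wm) :
    (fun x => ∫ ω, {ω' | ζ ω' * (Zm ω' : ℝ) / ((Zp ω' : ℝ) + 1) > x}.indicator Wp ω ∂μ)
      =o[atTop] tailP μ fun ω => (Zm ω : ℝ) := by
  have hZ : HasCondDistrib (fun ω => (Zm ω, Zp ω)) (fun ω => (Wm ω, Wp ω))
      (poissonPairKernel a b) μ := by
    refine hasCondDistrib_poisson_prod (hWm.prodMk hWp) hZm hZp _ _ fun m n s hs => ?_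
    rw [hcond m n s hs]
    refine integral_congr_ae (ae_restrict_of_ae ?_)
    filter_upwards [hWm0, hWp0] with ω hm hp
    rw [Real.coe_toNNReal _ (by positivity), Real.coe_toNNReal _ (by positivity)]
  refine IsLittleO.trans_isBigO (.of_bound fun ε hε => ?_) (hRV.isBigO_tailP_poisson hWm ha hZ)
  filter_upwards [eventually_setLIntegral_poissonPair_le hWm hWp ha hb hα hRV ho hZ hε] with x hx
  have hmeas : MeasurableSet {ω | ζ ω * (Zm ω : ℝ) / ((Zp ω : ℝ) + 1) > x} :=
    measurableSet_lt measurable_const (by fun_prop)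
  have hsub : {ω | ζ ω * (Zm ω : ℝ) / ((Zp ω : ℝ) + 1) > x} ≤ᵐ[μ] {ω | x * (Zp ω + 1) < Zm ω} := by
    filter_upwards [hζ1] with ω h1 (hω : x < ζ ω * Zm ω / (Zp ω + 1))
    rw [lt_div_iff₀ (by positivity)] at hω
    exact hω.trans_le (mul_le_of_le_one_left (Nat.cast_nonneg _) h1)
  rw [integral_indicator hmeas, integral_eq_lintegral_of_nonneg_ae (ae_restrict_of_ae hWp0)
    hWp.aestronglyMeasurable, Real.norm_of_nonneg ENNReal.toReal_nonneg,
    Real.norm_of_nonneg (tailP_nonneg x)]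
  exact ENNReal.toReal_le_of_le_ofReal (mul_nonneg hε.le (tailP_nonneg x))
    ((lintegral_mono_set' hsub).trans hx)

/-- Example 4.4 of the paper, IRD case: for the inhomogeneous random
digraph with mixed Poisson degrees `Z⁻, Z⁺` (conditionally independent Poisson with means
`E[W⁺]W⁻/θ` and `E[W⁻]W⁺/θ` given `(W⁻, W⁺, ζ)`), if `P(W⁻ > x) ∈ RV(−α)` and
`P(W⁻/(W⁺ ∨ 1) > x) = o(P(W⁻ > x))`, then
`E[1(ζ Z⁻/(Z⁺+1) > x) W⁺] = o(E[W⁺] P(Z⁻ > x))`, i.e. `P(𝒞𝒩 > x) = o(P(𝒩₀ > x))`. -/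
theorem ird_size_biased_NC_negligible
    {Ω : Type*} [MeasurableSpace Ω] (μ : Measure Ω) [IsProbabilityMeasure μ]
    (Wm Wp ζ : Ω → ℝ) (Zm Zp : Ω → ℕ)
    (hWm : Measurable Wm) (hWp : Measurable Wp) (hζ : Measurable ζ)
    (hZm : Measurable Zm) (hZp : Measurable Zp)
    (hWm0 : ∀ᵐ ω ∂μ, 0 ≤ Wm ω) (hWp0 : ∀ᵐ ω ∂μ, 0 ≤ Wp ω)
    (hζbd : ∀ᵐ ω ∂μ, |ζ ω| ≤ 1)
    (hWmInt : Integrable Wm μ) (hWpInt : Integrable Wp μ)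
    (hWmPos : 0 < ∫ ω, Wm ω ∂μ) (hWpPos : 0 < ∫ ω, Wp ω ∂μ)
    (θ : ℝ) (hθ : θ = ∫ ω, (Wm ω + Wp ω) ∂μ)
    -- `Z⁻` and `Z⁺` are conditionally independent Poisson given `(W⁻, W⁺, ζ)`
    (hcond : ∀ (m n : ℕ) (s : Set (ℝ × ℝ × ℝ)), MeasurableSet s →
      (μ {ω | Zm ω = m ∧ Zp ω = n ∧ (Wm ω, Wp ω, ζ ω) ∈ s}).toReal
        = ∫ ω in {ω | (Wm ω, Wp ω, ζ ω) ∈ s},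
            poissonPdf ((∫ ω', Wp ω' ∂μ) * Wm ω / θ) m
              * poissonPdf ((∫ ω', Wm ω' ∂μ) * Wp ω / θ) n ∂μ)
    (α : ℝ) (hα : 1 < α)
    (hRV : RVtail (tailP μ Wm) α)
    (ho : (fun x => tailP μ (fun ω => Wm ω / max (Wp ω) 1) x)
      =o[atTop] fun x => tailP μ Wm x) :
    (fun x => ∫ ω, Set.indicator
        {ω' | ζ ω' * (Zm ω' : ℝ) / ((Zp ω' : ℝ) + 1) > x} Wp ω ∂μ)
      =o[atTop] fun x => (∫ ω, Wp ω ∂μ) * tailP μ (fun ω => (Zm ω : ℝ)) x := by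
  have hθ0 : 0 < θ := hθ ▸ integral_add hWmInt hWpInt ▸ add_pos hWmPos hWpPos
  refine (ird_size_biased_NC_negligible_general hWm hWp hζ hZm hZp hWm0 hWp0
    (hζbd.mono fun _ => le_of_abs_le) (div_pos hWpPos hθ0) (div_pos hWmPos hθ0)
    (fun m n s hs => ?_) hα hRV ho).const_mul_right hWpPos.ne'
  have hproj : Measurable fun t : ℝ × ℝ × ℝ => (t.1, t.2.1) := by fun_prop
  simpa only [mul_div_right_comm, mem_preimage] using hcond m n _ (hproj hs)
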